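/- Let f : E → ℝ be twice continuously differentiable and ℤⁿ-periodic, and let A : E → ℝ be continuous with A x > 0 for all x. If Δ f x = A x * f x for all x ∈ E, then f is identically zero. -/

import Mathlib

/-- The Laplacian of `f` at `x`: the sum of the pure second directional derivatives of `f`
at `x` along the standard orthonormal basis directions of `EuclideanSpace ℝ (Fin n)`. -/
noncomputable def laplacian {n : ℕ} (f : EuclideanSpace ℝ (Fin n) → ℝ)
    (x : EuclideanSpace ℝ (Fin n)) : ℝ :=
  ∑ i : Fin n, (iteratedFDeriv ℝ 2 f x)
    ![EuclideanSpace.single i (1 : ℝ), EuclideanSpace.single i (1 : ℝ)]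

open Filter Topology

/-- The second derivative of a real function at a local maximum is nonpositive. -/
theorem deriv_deriv_nonpos_of_isLocalMax {g : ℝ → ℝ} {t : ℝ} (hc : ContinuousAt g t)
    (h : IsLocalMax g t) : deriv (deriv g) t ≤ 0 := by
  by_contra! hpos
  have hmin := isLocalMin_of_deriv_deriv_pos hpos h.deriv_eq_zero hc
  have hconst : g =ᶠ[𝓝 t] fun _ => g t := by
    filter_upwards [h, hmin] with s h₁ h₂ using le_antisymm h₁ h₂
  have hzero := hconst.deriv.deriv_eq
  simp only [deriv_const'] at hzero
  exact hpos.ne' hzero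

/-- The pure second directional derivatives of a `C²` function at a maximum are nonpositive. -/
theorem iteratedFDeriv_two_nonpos_of_forall_le {E : Type*} [NormedAddCommGroup E]
    [NormedSpace ℝ E] {f : E → ℝ} (hf : ContDiff ℝ 2 f) {x : E} (hx : ∀ y, f y ≤ f x) (v : E) :
    iteratedFDeriv ℝ 2 f x ![v, v] ≤ 0 := by
  have hline (t : ℝ) : HasDerivAt (fun s : ℝ => x + s • v) v t := by
    simpa using ((hasDerivAt_id t).smul_const v).const_add x
  have hderiv : deriv (fun s : ℝ => f (x + s • v)) = fun s => fderiv ℝ f (x + s • v) v := by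
    funext t
    exact ((hf.differentiable (by norm_num) _).hasFDerivAt.comp_hasDerivAt t (hline t)).deriv
  have hf' : Differentiable ℝ (fderiv ℝ f) :=
    (hf.fderiv_right (m := 1) (by norm_num)).differentiable (by norm_num)
  have hderiv₂ : deriv (deriv fun s : ℝ => f (x + s • v)) 0 = fderiv ℝ (fderiv ℝ f) x v v := by
    rw [hderiv]
    have h := ((hf' _).hasFDerivAt.comp_hasDerivAt (0 : ℝ) (hline 0)).clm_apply
      (hasDerivAt_const (0 : ℝ) v)
    simpa using h.deriv
  rw [iteratedFDeriv_two_apply]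
  simp only [Matrix.cons_val_zero, Matrix.cons_val_one]
  rw [← hderiv₂]
  refine deriv_deriv_nonpos_of_isLocalMax ?_ (Eventually.of_forall fun s => ?_)
  · exact (hf.continuous.comp (by fun_prop)).continuousAt
  · simpa using hx (x + s • v)

/-- A continuous function that is periodic along the standard lattice attains its maximum. -/
theorem exists_forall_le_of_periodic {n : ℕ} {f : EuclideanSpace ℝ (Fin n) → ℝ}
    (hf : Continuous f)
    (hper : ∀ (x : EuclideanSpace ℝ (Fin n)) (i : Fin n),
      f (x + EuclideanSpace.single i (1 : ℝ)) = f x) :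
    ∃ x, ∀ y, f y ≤ f x := by
  have hlattice (z : Fin n → ℤ) :
      Function.Periodic f (∑ i, z i • EuclideanSpace.single i (1 : ℝ)) := by
    refine Finset.sum_induction _ (Function.Periodic f) (fun _ _ h₁ h₂ => h₁.add_period h₂)
      (fun x => by simp) fun i _ => ?_
    exact Function.Periodic.zsmul (fun x => hper x i) (z i)
  have hcompact : IsCompact
      (WithLp.toLp 2 '' Set.Icc (0 : Fin n → ℝ) 1 : Set (EuclideanSpace ℝ (Fin n))) :=
    isCompact_Icc.image (PiLp.continuous_toLp 2 _)
  obtain ⟨x, -, hx⟩ := hcompact.exists_isMaxOn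
    ((Set.nonempty_Icc.2 zero_le_one).image _) hf.continuousOn
  refine ⟨x, fun y => ?_⟩
  have hy : WithLp.toLp 2 (fun i => Int.fract (y i)) +
      ∑ i, ⌊y i⌋ • EuclideanSpace.single i (1 : ℝ) = y := by
    ext j
    simp [Finset.sum_apply, Pi.single_apply, Int.fract_add_floor]
  rw [← hy, hlattice]
  exact hx ⟨_, ⟨fun i => Int.fract_nonneg _, fun i => (Int.fract_lt_one _).le⟩, rfl⟩

/-- A weak maximum principle: a periodic `C²` function satisfying `Δ f = A f` with `A > 0` is
nonpositive. -/
theorem nonpos_of_laplacian_eq_pos_mul {n : ℕ} {f A : EuclideanSpace ℝ (Fin n) → ℝ}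
    (hf : ContDiff ℝ 2 f)
    (hper : ∀ (x : EuclideanSpace ℝ (Fin n)) (i : Fin n),
      f (x + EuclideanSpace.single i (1 : ℝ)) = f x)
    (hApos : ∀ x, 0 < A x) (heq : ∀ x, laplacian f x = A x * f x)
    (x : EuclideanSpace ℝ (Fin n)) : f x ≤ 0 := by
  obtain ⟨y, hy⟩ := exists_forall_le_of_periodic hf.continuous hper
  have hlap : laplacian f y ≤ 0 :=
    Finset.sum_nonpos fun i _ => iteratedFDeriv_two_nonpos_of_forall_le hf hy _
  rw [heq] at hlap
  exact (hy x).trans (nonpos_of_mul_nonpos_right hlap (hApos y))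

theorem laplacian_neg {n : ℕ} (f : EuclideanSpace ℝ (Fin n) → ℝ)
    (x : EuclideanSpace ℝ (Fin n)) : laplacian (-f) x = -laplacian f x := by
  simp [laplacian, iteratedFDeriv_neg_apply]

theorem eq_zero_of_laplacian_eq_pos_mul {n : ℕ} (hn : 0 < n)
    (f : EuclideanSpace ℝ (Fin n) → ℝ) (hf : ContDiff ℝ 2 f)
    (hper : ∀ (x : EuclideanSpace ℝ (Fin n)) (i : Fin n),
      f (x + EuclideanSpace.single i (1 : ℝ)) = f x)
    (A : EuclideanSpace ℝ (Fin n) → ℝ) (hA : Continuous A)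
    (hApos : ∀ x, 0 < A x)
    (heq : ∀ x, laplacian f x = A x * f x) :
    ∀ x, f x = 0 := by
  intro x
  refine le_antisymm (nonpos_of_laplacian_eq_pos_mul hf hper hApos heq x) ?_
  have h := nonpos_of_laplacian_eq_pos_mul (f := -f) hf.neg
    (fun x i => by simp [hper]) hApos (fun x => by simp [laplacian_neg, heq]) x
  simpa using h
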